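/- arXiv:1712.09677 — 10 statements merged into one kernel-verified Lean document; each statement's English description precedes it below -/
import Mathlib

section
/- Let (H_k)_{k≥1} be an arbitrary sequence of real m×m matrices, let ω, β ∈ ℝ, and define iterates by x₀ = x₁ ∈ ℝⁿ and x_{k+1} := x_k − ω B⁻¹AᵀH_k(Ax_k − b) + β(x_k − x_{k−1}) for k ≥ 1. Then for every k ≥ 0 the vector x_k − x₀ lies in the range of B⁻¹Aᵀ, and consequently Π_L^B(x_k) = Π_L^B(x₀) for all k ≥ 0. -/
/-!
Every stochastic gradient lies in the subspace `Range(B⁻¹Aᵀ)`, so the iterates never leave the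
coset `x₀ + Range(B⁻¹Aᵀ)`. In the `B`-inner product this subspace is orthogonal to `ker A`, the
direction of the solution set `L`. Hence moving the centre inside the coset changes the squared
`B`-distances to all points of `L` by the same amount, and the minimizers do not change.
-/

open Matrix

theorem heavyBall_sub_mem {R M : Type*} [Ring R] [AddCommGroup M] [Module R M]
    (W : Submodule R M) {x g : ℕ → M} {β : ℕ → R} (hg : ∀ k, 1 ≤ k → g k ∈ W) (hx : x 1 = x 0)
    (hrec : ∀ k, 1 ≤ k → x (k + 1) = x k - g k + β k • (x k - x (k - 1))) (k : ℕ) :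
    x k - x 0 ∈ W := by
  induction k using Nat.twoStepInduction with
  | zero => simp
  | one => simp [hx]
  | more k ih_prev ih =>
    have hk : 1 ≤ k + 1 := Nat.le_add_left 1 k
    have hstep : x (k + 2) - x 0 =
        (x (k + 1) - x 0) - g (k + 1) + β (k + 1) • ((x (k + 1) - x 0) - (x k - x 0)) := by
      rw [hrec (k + 1) hk, Nat.add_sub_cancel, sub_sub_sub_cancel_right]
      abel
    rw [hstep]
    exact W.add_mem (W.sub_mem ih (hg _ hk)) (W.smul_mem _ (W.sub_mem ih ih_prev))

section WeightedProjection

variable {ι κ R : Type*} [Fintype ι] [Fintype κ] [CommRing R]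

/-- The squared distance `‖z - c‖_B²` defined by the matrix `B`; positivity of `B` is not part of
the definition, so the value may be negative. -/
def weightedSqDist (B : Matrix ι ι R) (z c : ι → R) : R :=
  (z - c) ⬝ᵥ (B *ᵥ (z - c))

/-- `p` is a `B`-projection of `c` onto `L`, that is, `p = Π_L^B(c)` when the minimizer is unique.
Being a relation, it presupposes neither existence nor uniqueness of the projection. -/
def IsWeightedProj [LE R] (B : Matrix ι ι R) (L : Set (ι → R)) (c p : ι → R) : Prop :=
  p ∈ L ∧ ∀ z ∈ L, weightedSqDist B p c ≤ weightedSqDist B z c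

theorem weightedSqDist_eq_sub_add {B : Matrix ι ι R} (hB : B.IsSymm) (z c c' : ι → R) :
    weightedSqDist B z c' =
      weightedSqDist B z c - 2 * ((z - c) ⬝ᵥ (B *ᵥ (c' - c))) + weightedSqDist B c' c := by
  have hcomm : (c' - c) ⬝ᵥ (B *ᵥ (z - c)) = (z - c) ⬝ᵥ (B *ᵥ (c' - c)) := by
    rw [dotProduct_mulVec, ← mulVec_transpose, hB.eq, dotProduct_comm]
  simp only [weightedSqDist]
  rw [← sub_sub_sub_cancel_right z c' c, mulVec_sub, sub_dotProduct, dotProduct_sub,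
    dotProduct_sub, hcomm]
  ring

theorem weightedSqDist_sub_eq_of_orthogonal {B : Matrix ι ι R} (hB : B.IsSymm)
    {z p c c' : ι → R} (horth : (z - p) ⬝ᵥ (B *ᵥ (c' - c)) = 0) :
    weightedSqDist B z c' - weightedSqDist B p c' =
      weightedSqDist B z c - weightedSqDist B p c := by
  have hinner : (z - c) ⬝ᵥ (B *ᵥ (c' - c)) = (p - c) ⬝ᵥ (B *ᵥ (c' - c)) := by
    rw [← sub_eq_zero, ← sub_dotProduct, sub_sub_sub_cancel_right, horth]
  rw [weightedSqDist_eq_sub_add hB z c c', weightedSqDist_eq_sub_add hB p c c', hinner]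
  ring

theorem isWeightedProj_iff_of_orthogonal [PartialOrder R] [IsOrderedAddMonoid R]
    {B : Matrix ι ι R} (hB : B.IsSymm) {L : Set (ι → R)} {c c' : ι → R}
    (horth : ∀ z ∈ L, ∀ p ∈ L, (z - p) ⬝ᵥ (B *ᵥ (c' - c)) = 0) (p : ι → R) :
    IsWeightedProj B L c p ↔ IsWeightedProj B L c' p := by
  refine and_congr_right fun hp => forall₂_congr fun z hz => ?_
  rw [← sub_nonneg, ← weightedSqDist_sub_eq_of_orthogonal hB (horth z hz p hp), sub_nonneg]

theorem sub_dotProduct_mulVec_inv_mulVec_transpose_eq_zero [DecidableEq ι] {A : Matrix κ ι R}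
    {B : Matrix ι ι R} (hB : IsUnit B) {z p : ι → R} (hzp : A *ᵥ z = A *ᵥ p) (y : κ → R) :
    (z - p) ⬝ᵥ (B *ᵥ (B⁻¹ *ᵥ (Aᵀ *ᵥ y))) = 0 := by
  rw [mulVec_mulVec, mul_nonsing_inv B (B.isUnit_iff_isUnit_det.mp hB), one_mulVec,
    dotProduct_mulVec, vecMul_transpose, mulVec_sub, hzp, sub_self, zero_dotProduct]

theorem mSGD_projection_invariance_general [DecidableEq ι] [PartialOrder R] [IsOrderedAddMonoid R]
    (A : Matrix κ ι R) (b : κ → R) {B : Matrix ι ι R} (hBsymm : B.IsSymm) (hBunit : IsUnit B)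
    (v : ℕ → κ → R) (β : ℕ → R) {x : ℕ → ι → R} (hx : x 1 = x 0)
    (hrec : ∀ k, 1 ≤ k →
      x (k + 1) = x k - B⁻¹ *ᵥ (Aᵀ *ᵥ v k) + β k • (x k - x (k - 1))) (k : ℕ) :
    (∃ y : κ → R, x k - x 0 = B⁻¹ *ᵥ (Aᵀ *ᵥ y)) ∧
      ∀ p, IsWeightedProj B {z | A *ᵥ z = b} (x 0) p ↔
        IsWeightedProj B {z | A *ᵥ z = b} (x k) p := by
  obtain ⟨y, hy⟩ : x k - x 0 ∈ LinearMap.range (B⁻¹.mulVecLin ∘ₗ Aᵀ.mulVecLin) :=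
    heavyBall_sub_mem _ (fun k _ => LinearMap.mem_range_self _ (v k)) hx hrec k
  have hxk : x k - x 0 = B⁻¹ *ᵥ (Aᵀ *ᵥ y) := hy.symm
  refine ⟨⟨y, hxk⟩, isWeightedProj_iff_of_orthogonal hBsymm fun z hz p hp => ?_⟩
  rw [hxk]
  exact sub_dotProduct_mulVec_inv_mulVec_transpose_eq_zero hBunit (hz.trans hp.symm) y

end WeightedProjection

/-- Theorem 2 (invariance of the projection): for any sequence of matrices `H_k` and any
`ω, β ∈ ℝ`, the iterates `x_{k+1} = x_k - ω B⁻¹AᵀH_k(Ax_k - b) + β(x_k - x_{k-1})`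
started from `x₀ = x₁` satisfy `x_k - x₀ ∈ Range(B⁻¹Aᵀ)` for all `k`, and consequently
the `B`-projections of `x_k` and of `x₀` onto the solution set `L = {x : Ax = b}`
coincide (a point is a `B`-projection of `x₀` onto `L` iff it is one of `x_k`). -/
theorem mSGD_projection_invariance
    {m n : ℕ}
    (A : Matrix (Fin m) (Fin n) ℝ) (b : Fin m → ℝ)
    (B : Matrix (Fin n) (Fin n) ℝ) (hB : B.PosDef)
    (hcons : ∃ x, A *ᵥ x = b)
    (H : ℕ → Matrix (Fin m) (Fin m) ℝ) (ω β : ℝ)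
    (x : ℕ → Fin n → ℝ) (x₀ : Fin n → ℝ)
    (hx0 : x 0 = x₀) (hx1 : x 1 = x₀)
    (hrec : ∀ k, 1 ≤ k →
      x (k + 1) = x k - ω • (B⁻¹ *ᵥ (Aᵀ *ᵥ (H k *ᵥ (A *ᵥ x k - b))))
        + β • (x k - x (k - 1))) :
    ∀ k : ℕ,
      (∃ y : Fin m → ℝ, x k - x₀ = B⁻¹ *ᵥ (Aᵀ *ᵥ y)) ∧
      (∀ p : Fin n → ℝ,
        (A *ᵥ p = b ∧ ∀ z, A *ᵥ z = b →
            (p - x₀) ⬝ᵥ (B *ᵥ (p - x₀)) ≤ (z - x₀) ⬝ᵥ (B *ᵥ (z - x₀))) ↔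
        (A *ᵥ p = b ∧ ∀ z, A *ᵥ z = b →
            (p - x k) ⬝ᵥ (B *ᵥ (p - x k)) ≤ (z - x k) ⬝ᵥ (B *ᵥ (z - x k)))) := by
  subst hx0
  exact mSGD_projection_invariance_general A b (isHermitian_iff_isSymm.mp hB.isHermitian) hB.isUnit
    (fun k => ω • (H k *ᵥ (A *ᵥ x k - b))) (fun _ => β) hx1
    (by simpa only [mulVec_smul] using hrec)
end

section
/- Let (H_k)_{k≥1} be an arbitrary sequence of real m×m matrices, let ω, β ∈ ℝ, and let x₀ = x₁ ∈ ℝⁿ. Define primal iterates x_{k+1} := x_k − ω B⁻¹AᵀH_k(Ax_k − b) + β(x_k − x_{k−1}) for k ≥ 1, and dual iterates y₀ = y₁ = 0 ∈ ℝ^m, y_{k+1} := y_k + ω H_k(b − A(x₀ + B⁻¹Aᵀy_k)) + β(y_k − y_{k−1}) for k ≥ 1. Then for every k ≥ 0, x_k = x₀ + B⁻¹Aᵀy_k; that is, the primal iterates arise as affine images of the dual iterates under the map φ(y) := x₀ + B⁻¹Aᵀy. -/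
open Matrix

/-!
The map `φ v = x₀ + B⁻¹Aᵀv` carries a dual step `ωH_k(b - Aφ(v))` to `ωB⁻¹AᵀH_k(b - Aφ(v))`, the
primal step at `φ v`, and the momentum term is a difference of iterates, on which `φ` acts through
its linear part. So the images of the dual iterates satisfy the primal recursion, whose solution is
determined by its first two terms.
-/

section MomentumIteration

variable {R V W : Type*} [Ring R] [AddCommGroup V] [Module R V] [AddCommGroup W] [Module R W]

/-- The heavy-ball recursion with momentum parameter `β`, where `step k v` is the increment, step
size included, made at time `k` from the point `v`. As in the paper the recursion starts at
`k = 1`, leaving the values at `0` and `1` free. -/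
def IsMomentumIteration (β : R) (step : ℕ → V → V) (z : ℕ → V) : Prop :=
  ∀ k, 1 ≤ k → z (k + 1) = z k + step k (z k) + β • (z k - z (k - 1))

namespace IsMomentumIteration

variable {β : R}

theorem unique {step : ℕ → V → V} {z z' : ℕ → V}
    (hz : IsMomentumIteration β step z) (hz' : IsMomentumIteration β step z')
    (h₀ : z 0 = z' 0) (h₁ : z 1 = z' 1) : z = z' := by
  funext k
  induction k using Nat.twoStepInduction with
  | zero => exact h₀
  | one => exact h₁
  | more k ih₀ ih₁ =>
    rw [hz (k + 1) k.succ_pos, hz' (k + 1) k.succ_pos, Nat.add_sub_cancel, ih₀, ih₁]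

theorem map {step : ℕ → V → V} {step' : ℕ → W → W} {z : ℕ → V}
    (hz : IsMomentumIteration β step z) (φ : V →ᵃ[R] W)
    (hstep : ∀ k v, φ.linear (step k v) = step' k (φ v)) :
    IsMomentumIteration β step' (φ ∘ z) := by
  intro k hk
  have map_add (v u : V) : φ (v + u) = φ v + φ.linear u := by
    rw [add_comm v, ← vadd_eq_add, φ.map_vadd, vadd_eq_add, add_comm]
  have map_sub (v u : V) : φ.linear (v - u) = φ v - φ u := φ.linearMap_vsub v u
  simp only [Function.comp_apply, hz k hk, map_add, map_smul, map_sub, hstep]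

end IsMomentumIteration

theorem primal_dual_correspondence_general {β : R} (φ : V →ᵃ[R] W) (d : ℕ → W → V)
    {x : ℕ → W} {y : ℕ → V}
    (hx : IsMomentumIteration β (fun k w ↦ φ.linear (d k w)) x)
    (hy : IsMomentumIteration β (fun k v ↦ d k (φ v)) y)
    (h₀ : x 0 = φ (y 0)) (h₁ : x 1 = φ (y 1)) (k : ℕ) : x k = φ (y k) :=
  congrFun (hx.unique (hy.map φ fun _ _ ↦ rfl) h₀ h₁) k

end MomentumIteration

section DualToPrimal

variable {R m n : Type*} [CommRing R] [Fintype m] [Fintype n] [DecidableEq n]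
  (A : Matrix m n R) (B : Matrix n n R) (x₀ : n → R)

/-- The affine map `φ(y) = x₀ + B⁻¹Aᵀy` from dual to primal points. It is meant for invertible `B`:
Mathlib's `B⁻¹` is `0` otherwise. -/
noncomputable def dualToPrimal : (m → R) →ᵃ[R] (n → R) :=
  AffineMap.const R (m → R) x₀ + (B⁻¹.mulVecLin ∘ₗ Aᵀ.mulVecLin).toAffineMap

theorem dualToPrimal_apply (y : m → R) :
    dualToPrimal A B x₀ y = x₀ + B⁻¹ *ᵥ (Aᵀ *ᵥ y) :=
  rfl

theorem dualToPrimal_linear (y : m → R) :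
    (dualToPrimal A B x₀).linear y = B⁻¹ *ᵥ (Aᵀ *ᵥ y) := by
  simp only [dualToPrimal, AffineMap.add_linear, AffineMap.const_linear, zero_add,
    LinearMap.toAffineMap_linear, LinearMap.comp_apply, mulVecLin_apply]

theorem dualToPrimal_linear_smul_residual (M : Matrix m m R) (b : m → R) (ω : R) (v : n → R) :
    (dualToPrimal A B x₀).linear (ω • (M *ᵥ (b - A *ᵥ v))) =
      -(ω • (B⁻¹ *ᵥ (Aᵀ *ᵥ (M *ᵥ (A *ᵥ v - b))))) := by
  rw [dualToPrimal_linear, ← neg_sub (A *ᵥ v) b]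
  simp only [mulVec_neg, mulVec_smul, smul_neg]

end DualToPrimal

/-- Theorem 3 (correspondence between primal and dual methods with momentum): for any
sequence of matrices `H_k` and any `ω, β ∈ ℝ`, the primal iterates
`x_{k+1} = x_k - ω B⁻¹AᵀH_k(Ax_k - b) + β(x_k - x_{k-1})` (with `x₀ = x₁`) and the dual
iterates `y_{k+1} = y_k + ω H_k(b - A(x₀ + B⁻¹Aᵀy_k)) + β(y_k - y_{k-1})`
(with `y₀ = y₁ = 0`) satisfy `x_k = x₀ + B⁻¹Aᵀy_k` for every `k`. -/
theorem primal_dual_correspondence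
    {m n : ℕ}
    (A : Matrix (Fin m) (Fin n) ℝ) (b : Fin m → ℝ)
    (B : Matrix (Fin n) (Fin n) ℝ) (hB : B.PosDef)
    (H : ℕ → Matrix (Fin m) (Fin m) ℝ) (ω β : ℝ)
    (x₀ : Fin n → ℝ)
    (x : ℕ → Fin n → ℝ) (y : ℕ → Fin m → ℝ)
    (hx0 : x 0 = x₀) (hx1 : x 1 = x₀)
    (hy0 : y 0 = 0) (hy1 : y 1 = 0)
    (hxrec : ∀ k, 1 ≤ k →
      x (k + 1) = x k - ω • (B⁻¹ *ᵥ (Aᵀ *ᵥ (H k *ᵥ (A *ᵥ x k - b))))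
        + β • (x k - x (k - 1)))
    (hyrec : ∀ k, 1 ≤ k →
      y (k + 1) = y k + ω • (H k *ᵥ (b - A *ᵥ (x₀ + B⁻¹ *ᵥ (Aᵀ *ᵥ y k))))
        + β • (y k - y (k - 1))) :
    ∀ k : ℕ, x k = x₀ + B⁻¹ *ᵥ (Aᵀ *ᵥ y k) := by
  have hx : IsMomentumIteration β
      (fun k v ↦ (dualToPrimal A B x₀).linear (ω • (H k *ᵥ (b - A *ᵥ v)))) x := fun k hk ↦ by
    simp only [hxrec k hk, dualToPrimal_linear_smul_residual, sub_eq_add_neg (x k)]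
  exact primal_dual_correspondence_general (dualToPrimal A B x₀) _ hx hyrec
    (by simp [dualToPrimal_apply, hx0, hy0]) (by simp [dualToPrimal_apply, hx1, hy1])
end

section
/- Let n ≥ 1 be an integer, g > 0, and 0 < λ_min⁺ ≤ λ_max. With the total-complexity functions C_mSGD(β) := (g+n)/(1 − q(β)) and C_smSGD(β) := g/(1 − q̄(β)), the ratio of total complexities satisfies lim_{β → 0⁺} C_mSGD(β)/C_smSGD(βn) = (g+n)/g = 1 + n/g. -/
open Filter

/-!
At `β = 0` both convergence rates are the larger root of `x² = (1 - λ) x`, namely `max (1 - λ) 0`,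
and this differs from `1` because `λ ≠ 0`. The substitution `β ↦ β n` turns the coefficients of
smSGD into those of mSGD except that the two terms `2β²` are multiplied by `n`. The factors
`1 - q(β)` and `1 - q̄(βn)` therefore have the same nonzero limit, they cancel in the ratio of
complexities, and only the ratio of the costs per iteration is left.
-/

open Topology

/-- The largest real part of a root of `X² - a X - b`, the form in which convergence rates of
momentum methods arise. If the discriminant is negative, then `√` returns `0` and the value `a / 2`
is the common real part of the two complex roots. -/
noncomputable def maxRootRe (a b : ℝ) : ℝ :=
  (a + √(a ^ 2 + 4 * b)) / 2

lemma maxRootRe_zero_right (a : ℝ) : maxRootRe a 0 = max a 0 := by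
  rw [maxRootRe, mul_zero, add_zero, Real.sqrt_sq_eq_abs, add_abs_eq_two_nsmul_posPart,
    two_nsmul, add_self_div_two, posPart_def]

/-- The convergence rate of a momentum method with momentum parameter `β`, where the quadratic
terms in `β` carry a factor `s`: for `s = 1` it is the rate `q β` of mSGD, for `s = n` it is the
rate `q̄ (β n)` of smSGD. -/
noncomputable def momentumRate (s lmin lmax β : ℝ) : ℝ :=
  maxRootRe (1 + 3 * β + 2 * s * β ^ 2 - (1 + β) * lmin) (β + 2 * s * β ^ 2 + β * lmax)

section MomentumRate

variable (s lmin lmax : ℝ)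

lemma continuous_momentumRate : Continuous (momentumRate s lmin lmax) := by
  unfold momentumRate maxRootRe
  fun_prop

lemma momentumRate_zero : momentumRate s lmin lmax 0 = max (1 - lmin) 0 := by
  simp [momentumRate, maxRootRe_zero_right]

lemma tendsto_momentumRate_zero :
    Tendsto (momentumRate s lmin lmax) (𝓝 0) (𝓝 (max (1 - lmin) 0)) :=
  (continuous_momentumRate s lmin lmax).tendsto' 0 _ (momentumRate_zero s lmin lmax)

end MomentumRate

lemma tendsto_div_one_sub_div_div_one_sub {ι K : Type*} [Field K] [TopologicalSpace K]
    [IsTopologicalDivisionRing K] {l : Filter ι} {p q : ι → K} {r : K} (c d : K)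
    (hp : Tendsto p l (𝓝 r)) (hq : Tendsto q l (𝓝 r)) (hr : r ≠ 1) :
    Tendsto (fun i => c / (1 - p i) / (d / (1 - q i))) l (𝓝 (c / d)) := by
  have hr' : 1 - r ≠ 0 := sub_ne_zero.mpr hr.symm
  have hquot : Tendsto (fun i => (1 - q i) / (1 - p i)) l (𝓝 ((1 - r) / (1 - r))) :=
    (hq.const_sub 1).div (hp.const_sub 1) hr'
  rw [div_self hr'] at hquot
  have hratio (i : ι) :
      c / (1 - p i) / (d / (1 - q i)) = c / d * ((1 - q i) / (1 - p i)) := by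
    rw [div_div_div_eq, div_mul_div_comm, mul_comm d]
  simpa only [hratio, mul_one] using hquot.const_mul (c / d)

theorem stochastic_momentum_speedup_general
    {n g lmin lmax : ℝ} (hn : n ≠ 0) (hg : g ≠ 0) (hl0 : lmin ≠ 0)
    {a₁ a₂ ab₁ ab₂ q qb Cm Csm : ℝ → ℝ}
    (ha₁ : ∀ β, a₁ β = 1 + 3 * β + 2 * β ^ 2 - (1 + β) * lmin)
    (ha₂ : ∀ β, a₂ β = β + 2 * β ^ 2 + β * lmax)
    (hab₁ : ∀ β, ab₁ β = 1 + 3 * β / n + 2 * β ^ 2 / n - (1 + β / n) * lmin)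
    (hab₂ : ∀ β, ab₂ β = (β + 2 * β ^ 2 + β * lmax) / n)
    (hq : ∀ β, q β = (a₁ β + √(a₁ β ^ 2 + 4 * a₂ β)) / 2)
    (hqb : ∀ β, qb β = (ab₁ β + √(ab₁ β ^ 2 + 4 * ab₂ β)) / 2)
    (hCm : ∀ β, Cm β = (g + n) / (1 - q β))
    (hCsm : ∀ β, Csm β = g / (1 - qb β)) :
    Tendsto (fun β => Cm β / Csm (β * n)) (𝓝 0) (𝓝 ((g + n) / g)) ∧
      (g + n) / g = 1 + n / g := by
  have hq_rate (β : ℝ) : q β = momentumRate 1 lmin lmax β := by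
    rw [hq, ha₁, ha₂, momentumRate, maxRootRe, mul_one]
  have hab₁_mul (β : ℝ) : ab₁ (β * n) = 1 + 3 * β + 2 * n * β ^ 2 - (1 + β) * lmin := by
    rw [hab₁]; field_simp
  have hab₂_mul (β : ℝ) : ab₂ (β * n) = β + 2 * n * β ^ 2 + β * lmax := by
    rw [hab₂]; field_simp
  have hqb_rate (β : ℝ) : qb (β * n) = momentumRate n lmin lmax β := by
    rw [hqb, hab₁_mul, hab₂_mul, momentumRate, maxRootRe]
  have hrate_ne_one : max (1 - lmin) 0 ≠ 1 := by grind
  refine ⟨?_, by rw [add_div, div_self hg]⟩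
  simp only [hCm, hCsm, hq_rate, hqb_rate]
  exact tendsto_div_one_sub_div_div_one_sub (g + n) g (tendsto_momentumRate_zero 1 lmin lmax)
    (tendsto_momentumRate_zero n lmin lmax) hrate_ne_one

/-- Theorem 10 (speedup of stochastic momentum): for small `β`, the total complexity of
smSGD is approximately `1 + n/g` times smaller than that of mSGD; precisely,
`C_mSGD(β)/C_smSGD(βn) → (g+n)/g = 1 + n/g` as `β → 0⁺`. -/
theorem stochastic_momentum_speedup
    (n : ℕ) (hn : 1 ≤ n) (g lminp lmax : ℝ)
    (hg : 0 < g) (hl0 : 0 < lminp) (hl : lminp ≤ lmax)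
    (a₁ a₂ ab₁ ab₂ q qb Cm Csm : ℝ → ℝ)
    (ha₁ : ∀ β, a₁ β = 1 + 3 * β + 2 * β ^ 2 - (1 + β) * lminp)
    (ha₂ : ∀ β, a₂ β = β + 2 * β ^ 2 + β * lmax)
    (hab₁ : ∀ β, ab₁ β = 1 + 3 * β / n + 2 * β ^ 2 / n - (1 + β / n) * lminp)
    (hab₂ : ∀ β, ab₂ β = (β + 2 * β ^ 2 + β * lmax) / n)
    (hq : ∀ β, q β = (a₁ β + Real.sqrt ((a₁ β) ^ 2 + 4 * a₂ β)) / 2)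
    (hqb : ∀ β, qb β = (ab₁ β + Real.sqrt ((ab₁ β) ^ 2 + 4 * ab₂ β)) / 2)
    (hCm : ∀ β, Cm β = (g + n) / (1 - q β))
    (hCsm : ∀ β, Csm β = g / (1 - qb β)) :
    Tendsto (fun β : ℝ => Cm β / Csm (β * n)) (nhdsWithin 0 (Set.Ioi 0))
      (nhds ((g + n) / g)) ∧ (g + n) / g = 1 + n / g :=
  (stochastic_momentum_speedup_general (Nat.cast_ne_zero.mpr (Nat.one_le_iff_ne_zero.mp hn))
    hg.ne' hl0.ne' ha₁ ha₂ hab₁ hab₂ hq hqb hCm hCsm).imp_left (·.mono_left nhdsWithin_le_nhds)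
end

section
/- Fix F₁ = F₀ ≥ 0 and let (F_k)_{k≥0} be a sequence of nonnegative real numbers satisfying F_{k+1} ≤ a₁F_k + a₂F_{k−1} for all k ≥ 1, where a₂ ≥ 0, a₁ + a₂ < 1, and at least one of a₁, a₂ is positive. Let q := (a₁ + √(a₁² + 4a₂))/2 and δ := q − a₁. Then δ ≥ 0, 0 < q < 1, and F_{k+1} ≤ q^k (1+δ) F₀ for all k ≥ 1. Moreover q ≥ a₁ + a₂, with equality if and only if a₂ = 0. -/
/-!
The number `q` is the larger root of `X² = a₁ X + a₂`, and the other root is `-δ = a₁ - q`.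
Since `a₁ = q - δ` and `a₂ = q δ`, the recurrence reads
`F_{k+1} + δ F_k ≤ q (F_k + δ F_{k-1})`, so `F_{k+1} + δ F_k` is dominated by a geometric
sequence of ratio `q`. Evaluating the quadratic at `1` gives `(1 + δ) (1 - q) = 1 - (a₁ + a₂)`,
which places `q` below `1`, and then `q - (a₁ + a₂) = δ (1 - q)` compares `q` with `a₁ + a₂`.
-/

section SecondOrderRecurrence

variable {R : Type*} [CommRing R] [PartialOrder R] [IsOrderedRing R] {a b q : R} {F : ℕ → R}

lemma succ_add_sub_mul_le_pow_mul (hq0 : 0 ≤ q) (hq : q ^ 2 = a * q + b)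
    (hF : ∀ n, F (n + 2) ≤ a * F (n + 1) + b * F n) (n : ℕ) :
    F (n + 1) + (q - a) * F n ≤ q ^ n * (F 1 + (q - a) * F 0) := by
  induction n with
  | zero => simp
  | succ n ih =>
    calc F (n + 2) + (q - a) * F (n + 1)
        ≤ a * F (n + 1) + b * F n + (q - a) * F (n + 1) := by gcongr; exact hF n
      _ = q * (F (n + 1) + (q - a) * F n) := by linear_combination -F n * hq
      _ ≤ q * (q ^ n * (F 1 + (q - a) * F 0)) := by gcongr
      _ = q ^ (n + 1) * (F 1 + (q - a) * F 0) := by ring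

lemma succ_le_pow_mul_of_nonneg (hq0 : 0 ≤ q) (haq : a ≤ q) (hq : q ^ 2 = a * q + b)
    (hF : ∀ n, F (n + 2) ≤ a * F (n + 1) + b * F n) {n : ℕ} (hn : 0 ≤ F n) :
    F (n + 1) ≤ q ^ n * (F 1 + (q - a) * F 0) :=
  (le_add_of_nonneg_right (mul_nonneg (sub_nonneg.2 haq) hn)).trans
    (succ_add_sub_mul_le_pow_mul hq0 hq hF n)

end SecondOrderRecurrence

/-- The larger root of `X² = a X + b`, which governs the growth of sequences satisfying
`F (n + 2) ≤ a * F (n + 1) + b * F n`. It is a root only for `0 ≤ a ^ 2 + 4 * b`; otherwise the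
square root is `0` and the value is `a / 2`. -/
noncomputable def dominantRoot (a b : ℝ) : ℝ :=
  (a + √(a ^ 2 + 4 * b)) / 2

namespace dominantRoot

variable {a b : ℝ}

lemma sq_eq (h : 0 ≤ a ^ 2 + 4 * b) :
    dominantRoot a b ^ 2 = a * dominantRoot a b + b := by
  unfold dominantRoot
  linear_combination Real.sq_sqrt h / 4

lemma sub_mul_self (h : 0 ≤ a ^ 2 + 4 * b) :
    (dominantRoot a b - a) * dominantRoot a b = b := by
  linear_combination sq_eq h

lemma one_add_sub_mul_one_sub (h : 0 ≤ a ^ 2 + 4 * b) :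
    (1 + (dominantRoot a b - a)) * (1 - dominantRoot a b) = 1 - (a + b) := by
  linear_combination -sq_eq h

lemma sub_add_eq (h : 0 ≤ a ^ 2 + 4 * b) :
    dominantRoot a b - (a + b) = (dominantRoot a b - a) * (1 - dominantRoot a b) := by
  linear_combination sq_eq h

lemma left_le (hb : 0 ≤ b) : a ≤ dominantRoot a b := by
  have : a ≤ √(a ^ 2 + 4 * b) := Real.le_sqrt_of_sq_le (by linarith)
  unfold dominantRoot
  linarith

lemma pos (hb : 0 ≤ b) (h : 0 < a ∨ 0 < b) : 0 < dominantRoot a b := by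
  rcases h with ha | hb'
  · exact ha.trans_le (left_le hb)
  · have hmul : 0 < (dominantRoot a b - a) * dominantRoot a b := by
      rwa [sub_mul_self (by positivity)]
    exact pos_of_mul_pos_right hmul (sub_nonneg.2 (left_le hb))

lemma lt_one_iff (hb : 0 ≤ b) : dominantRoot a b < 1 ↔ a + b < 1 := by
  have hfactor : 0 < 1 + (dominantRoot a b - a) := by linarith [left_le (a := a) hb]
  rw [← sub_pos, ← mul_pos_iff_of_pos_left hfactor, one_add_sub_mul_one_sub (by positivity),
    sub_pos]

lemma add_le (hb : 0 ≤ b) (h : dominantRoot a b ≤ 1) : a + b ≤ dominantRoot a b := by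
  rw [← sub_nonneg, sub_add_eq (by positivity)]
  exact mul_nonneg (sub_nonneg.2 (left_le hb)) (sub_nonneg.2 h)

lemma add_eq_iff (h : 0 ≤ a ^ 2 + 4 * b) (h0 : dominantRoot a b ≠ 0)
    (h1 : dominantRoot a b ≠ 1) : a + b = dominantRoot a b ↔ b = 0 :=
  calc a + b = dominantRoot a b
      ↔ (dominantRoot a b - a) * (1 - dominantRoot a b) = 0 := by
        rw [← sub_add_eq h, sub_eq_zero, eq_comm]
    _ ↔ dominantRoot a b - a = 0 := mul_eq_zero_iff_right (sub_ne_zero.2 h1.symm)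
    _ ↔ (dominantRoot a b - a) * dominantRoot a b = 0 := (mul_eq_zero_iff_right h0).symm
    _ ↔ b = 0 := by rw [sub_mul_self h]

end dominantRoot

/-- Lemma 5 (key recurrence lemma): if `F₁ = F₀ ≥ 0` and the nonnegative sequence
`(F_k)` satisfies `F_{k+1} ≤ a₁ F_k + a₂ F_{k-1}` for all `k ≥ 1`, where `a₂ ≥ 0`,
`a₁ + a₂ < 1` and at least one of `a₁, a₂` is positive, then with
`q = (a₁ + √(a₁² + 4a₂))/2` and `δ = q - a₁` we have `δ ≥ 0`, `0 < q < 1`,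
`F_{k+1} ≤ q^k (1+δ) F₀` for all `k ≥ 1`, and `q ≥ a₁ + a₂` with equality iff `a₂ = 0`. -/
theorem recurrence_lemma
    (a₁ a₂ : ℝ) (F : ℕ → ℝ)
    (hF10 : F 1 = F 0) (hF0 : 0 ≤ F 0)
    (hFnonneg : ∀ k, 0 ≤ F k)
    (hrec : ∀ k, 1 ≤ k → F (k + 1) ≤ a₁ * F k + a₂ * F (k - 1))
    (ha₂ : 0 ≤ a₂) (hsum : a₁ + a₂ < 1) (hpos : 0 < a₁ ∨ 0 < a₂)
    (q δ : ℝ)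
    (hq : q = (a₁ + Real.sqrt (a₁ ^ 2 + 4 * a₂)) / 2)
    (hδ : δ = q - a₁) :
    0 ≤ δ ∧ 0 < q ∧ q < 1 ∧
      (∀ k, 1 ≤ k → F (k + 1) ≤ q ^ k * (1 + δ) * F 0) ∧
      a₁ + a₂ ≤ q ∧ (a₁ + a₂ = q ↔ a₂ = 0) := by
  obtain rfl : q = dominantRoot a₁ a₂ := hq
  subst hδ
  have hdiscrim : 0 ≤ a₁ ^ 2 + 4 * a₂ := by positivity
  have hle : a₁ ≤ dominantRoot a₁ a₂ := dominantRoot.left_le ha₂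
  have hq0 : 0 < dominantRoot a₁ a₂ := dominantRoot.pos ha₂ hpos
  have hq1 : dominantRoot a₁ a₂ < 1 := (dominantRoot.lt_one_iff ha₂).2 hsum
  refine ⟨sub_nonneg.2 hle, hq0, hq1, fun k _ ↦ ?_, dominantRoot.add_le ha₂ hq1.le,
    dominantRoot.add_eq_iff hdiscrim hq0.ne' hq1.ne⟩
  calc F (k + 1)
      ≤ dominantRoot a₁ a₂ ^ k * (F 1 + (dominantRoot a₁ a₂ - a₁) * F 0) :=
        succ_le_pow_mul_of_nonneg hq0.le hle (dominantRoot.sq_eq hdiscrim)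
          (fun n ↦ hrec (n + 1) n.succ_pos) (hFnonneg k)
    _ = dominantRoot a₁ a₂ ^ k * (1 + (dominantRoot a₁ a₂ - a₁)) * F 0 := by
        rw [hF10]; ring
end

section
/- Let H ∈ ℝ^{m×m} be symmetric positive semidefinite and set Z := AᵀHA; assume Z B⁻¹ Z = Z. Define f_H(x) := ½(Ax−b)ᵀH(Ax−b) and g(x) := B⁻¹AᵀH(Ax−b). Then for every x ∈ ℝⁿ: (i) f_H(x) = ½‖g(x)‖²_B = ½ g(x)ᵀ B g(x); and (ii) for every x_* with Ax_* = b, f_H(x) = ½⟨g(x), x − x_*⟩_B = ½ g(x)ᵀ B (x − x_*). -/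
open Matrix

/-!
Write `d = x - x_*` with `A x_* = b`, so that `A x - b = A d`, `2 f_H(x) = dᵀ Z d` and
`g(x) = B⁻¹ Z d`. The vector `B⁻¹ u` represents the functional `v ↦ uᵀ v` in the `B`-inner product,
whence `⟨g(x), d⟩_B = (Z d)ᵀ d = 2 f_H(x)`. The condition `Z B⁻¹ Z = Z` makes `P = B⁻¹ Z` a
`B`-orthogonal projection, so `‖P d‖²_B = ⟨P d, d⟩_B`, which is the other identity.
-/

section CommSemiring

variable {ι κ R : Type*} [Fintype ι] [CommSemiring R]

theorem mulVec_dotProduct_of_isSymm {M : Matrix ι ι R} (hM : M.IsSymm) (v w : ι → R) :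
    (M *ᵥ v) ⬝ᵥ w = v ⬝ᵥ (M *ᵥ w) := by
  rw [dotProduct_comm, ← dotProduct_transpose_mulVec, hM.eq]

theorem isSymm_transpose_mul_mul {H : Matrix ι ι R} (hH : H.IsSymm) (A : Matrix ι κ R) :
    (Aᵀ * H * A).IsSymm := by
  rw [Matrix.IsSymm, transpose_mul, transpose_mul, transpose_transpose, hH.eq, Matrix.mul_assoc]

variable [Fintype κ]

theorem transpose_mul_mul_mulVec (A : Matrix ι κ R) (H : Matrix ι ι R) (v : κ → R) :
    (Aᵀ * H * A) *ᵥ v = Aᵀ *ᵥ (H *ᵥ (A *ᵥ v)) := by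
  rw [← mulVec_mulVec, ← mulVec_mulVec]

theorem dotProduct_transpose_mul_mul_mulVec (A : Matrix ι κ R) (H : Matrix ι ι R) (v w : κ → R) :
    v ⬝ᵥ ((Aᵀ * H * A) *ᵥ w) = (A *ᵥ v) ⬝ᵥ (H *ᵥ (A *ᵥ w)) := by
  rw [transpose_mul_mul_mulVec, dotProduct_transpose_mulVec, dotProduct_comm]

end CommSemiring

section CommRing

variable {ι κ R : Type*} [Fintype ι] [Fintype κ] [DecidableEq κ] [CommRing R]

theorem mulVec_inv_mulVec {B : Matrix κ κ R} (hB : IsUnit B.det) (v : κ → R) :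
    B *ᵥ (B⁻¹ *ᵥ v) = v := by
  rw [mulVec_mulVec, mul_nonsing_inv B hB, one_mulVec]

theorem inv_mulVec_dotProduct_mulVec {B : Matrix κ κ R} (hB : B.IsSymm) (hdet : IsUnit B.det)
    (u v : κ → R) : (B⁻¹ *ᵥ u) ⬝ᵥ (B *ᵥ v) = u ⬝ᵥ v := by
  rw [← mulVec_dotProduct_of_isSymm hB, mulVec_inv_mulVec hdet]

theorem inv_mulVec_mulVec_dotProduct_mulVec_self {B Z : Matrix κ κ R} (hdet : IsUnit B.det)
    (hsymm : Z.IsSymm) (hZ : Z * B⁻¹ * Z = Z) (v : κ → R) :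
    (B⁻¹ *ᵥ (Z *ᵥ v)) ⬝ᵥ (B *ᵥ (B⁻¹ *ᵥ (Z *ᵥ v))) = v ⬝ᵥ (Z *ᵥ v) :=
  calc (B⁻¹ *ᵥ (Z *ᵥ v)) ⬝ᵥ (B *ᵥ (B⁻¹ *ᵥ (Z *ᵥ v)))
      = (Z *ᵥ v) ⬝ᵥ (B⁻¹ *ᵥ (Z *ᵥ v)) := by rw [mulVec_inv_mulVec hdet, dotProduct_comm]
    _ = v ⬝ᵥ ((Z * B⁻¹ * Z) *ᵥ v) := by
      rw [mulVec_dotProduct_of_isSymm hsymm, mulVec_mulVec, mulVec_mulVec]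
    _ = v ⬝ᵥ (Z *ᵥ v) := by rw [hZ]

theorem stochastic_function_identities_general
    (A : Matrix ι κ R) (b : ι → R)
    {B : Matrix κ κ R} (hB : B.IsSymm) (hdet : IsUnit B.det)
    (hcons : ∃ x, A *ᵥ x = b)
    {H : Matrix ι ι R} (hH : H.IsSymm)
    (hZ : (Aᵀ * H * A) * B⁻¹ * (Aᵀ * H * A) = Aᵀ * H * A)
    (c : R) (fH : (κ → R) → R)
    (hfH : ∀ x, fH x = c * ((A *ᵥ x - b) ⬝ᵥ (H *ᵥ (A *ᵥ x - b))))
    (g : (κ → R) → (κ → R))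
    (hg : ∀ x, g x = B⁻¹ *ᵥ (Aᵀ *ᵥ (H *ᵥ (A *ᵥ x - b)))) :
    (∀ x, fH x = c * (g x ⬝ᵥ (B *ᵥ g x))) ∧
    (∀ x xstar, A *ᵥ xstar = b → fH x = c * (g x ⬝ᵥ (B *ᵥ (x - xstar)))) := by
  have residual_eq (x xstar) (h : A *ᵥ xstar = b) : A *ᵥ x - b = A *ᵥ (x - xstar) := by
    rw [mulVec_sub, h]
  have hf_eq (x xstar) (h : A *ᵥ xstar = b) :
      fH x = c * ((x - xstar) ⬝ᵥ ((Aᵀ * H * A) *ᵥ (x - xstar))) := by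
    rw [hfH, dotProduct_transpose_mul_mul_mulVec, residual_eq x xstar h]
  have hg_eq (x xstar) (h : A *ᵥ xstar = b) :
      g x = B⁻¹ *ᵥ ((Aᵀ * H * A) *ᵥ (x - xstar)) := by
    rw [hg, transpose_mul_mul_mulVec, residual_eq x xstar h]
  constructor
  · intro x
    obtain ⟨xstar, h⟩ := hcons
    rw [hf_eq x xstar h, hg_eq x xstar h,
      inv_mulVec_mulVec_dotProduct_mulVec_self hdet (isSymm_transpose_mul_mul hH A) hZ]
  · intro x xstar h
    rw [hf_eq x xstar h, hg_eq x xstar h, inv_mulVec_dotProduct_mulVec hB hdet, dotProduct_comm]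

end CommRing

/-- Lemma 6: with `H` symmetric positive semidefinite, `Z := AᵀHA` satisfying
`Z B⁻¹ Z = Z`, `f_H(x) := ½(Ax-b)ᵀH(Ax-b)` and `g(x) := B⁻¹AᵀH(Ax-b)` (the gradient of
`f_H` in the `B`-inner product), we have `f_H(x) = ½‖g(x)‖²_B` for all `x`, and
`f_H(x) = ½⟨g(x), x - x_*⟩_B` whenever `Ax_* = b`. -/
theorem stochastic_function_identities
    {m n : ℕ}
    (A : Matrix (Fin m) (Fin n) ℝ) (b : Fin m → ℝ)
    (B : Matrix (Fin n) (Fin n) ℝ) (hB : B.PosDef)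
    (hcons : ∃ x, A *ᵥ x = b)
    (H : Matrix (Fin m) (Fin m) ℝ) (hH : H.PosSemidef)
    (hZ : (Aᵀ * H * A) * B⁻¹ * (Aᵀ * H * A) = Aᵀ * H * A)
    (fH : (Fin n → ℝ) → ℝ)
    (hfH : ∀ x, fH x = (1 / 2) * ((A *ᵥ x - b) ⬝ᵥ (H *ᵥ (A *ᵥ x - b))))
    (g : (Fin n → ℝ) → (Fin n → ℝ))
    (hg : ∀ x, g x = B⁻¹ *ᵥ (Aᵀ *ᵥ (H *ᵥ (A *ᵥ x - b)))) :
    (∀ x, fH x = (1 / 2) * (g x ⬝ᵥ (B *ᵥ g x))) ∧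
    (∀ x xstar, A *ᵥ xstar = b → fH x = (1 / 2) * (g x ⬝ᵥ (B *ᵥ (x - xstar)))) :=
  stochastic_function_identities_general A b (isHermitian_iff_isSymm.mp hB.isHermitian)
    hB.det_pos.ne'.isUnit hcons (isHermitian_iff_isSymm.mp hH.isHermitian) hZ (1 / 2) fH hfH g hg
end

section
/- Let n ≥ 1 be an integer and 0 ≤ λ_min⁺ ≤ λ_max. Then for every β ≥ 0, the convergence rate of smSGD with momentum parameter βn is at least that of mSGD with momentum parameter β: q̄(βn) ≥ q(β). In particular, ā₁(βn) − a₁(β) = 2β²(n−1) ≥ 0 and ā₂(βn) − a₂(β) = 2β²(n−1) ≥ 0. -/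
/-!
Both rates are the larger root of `t ^ 2 = b * t + c`. A number `t` bounds that root from above
exactly when it lies to the right of the vertex and satisfies `b * t + c ≤ t ^ 2`; when the root is
nonnegative, decreasing `b` and `c` preserves both conditions, so the root is monotone in the
coefficients. Since mSGD is smSGD with `n = 1`, it remains to observe that, with momentum `β * n`,
the factors of `n` cancel in both coefficients of smSGD except for a summand `2 * β ^ 2 * n`.
-/

section LargerRoot

/-- The larger root of `t ^ 2 = b * t + c`, which governs the decay of the recursion
`u (k + 2) = b * u (k + 1) + c * u k`. If the discriminant is negative, the convention
`√x = 0` for `x < 0` makes it the vertex `b / 2`. -/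
noncomputable def largerRoot (b c : ℝ) : ℝ := (b + √(b ^ 2 + 4 * c)) / 2

variable {b b' c c' t : ℝ}

lemma largerRoot_le_iff : largerRoot b c ≤ t ↔ b ≤ 2 * t ∧ b * t + c ≤ t ^ 2 := by
  have sqrt_le : largerRoot b c ≤ t ↔ √(b ^ 2 + 4 * c) ≤ 2 * t - b := by
    rw [largerRoot, div_le_iff₀ two_pos, le_sub_iff_add_le', mul_comm t]
  have complete_square : (2 * t - b) ^ 2 - (b ^ 2 + 4 * c) = 4 * (t ^ 2 - (b * t + c)) := by ring
  rw [sqrt_le, Real.sqrt_le_iff, sub_nonneg]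
  refine and_congr_right fun _ ↦ ?_
  constructor <;> intro h <;> linarith [complete_square]

lemma largerRoot_nonneg (hc : 0 ≤ c) : 0 ≤ largerRoot b c := by
  have abs_le : |b| ≤ √(b ^ 2 + 4 * c) := Real.abs_le_sqrt (by linarith)
  rw [largerRoot]
  linarith [neg_abs_le b]

lemma largerRoot_le_largerRoot (hb : b ≤ b') (hc : c ≤ c') (hc' : 0 ≤ c') :
    largerRoot b c ≤ largerRoot b' c' := by
  obtain ⟨vertex_le, le_sq⟩ := largerRoot_le_iff.1 (le_refl (largerRoot b' c'))
  refine largerRoot_le_iff.2 ⟨hb.trans vertex_le, le_trans ?_ le_sq⟩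
  gcongr
  exact largerRoot_nonneg hc'

end LargerRoot

section Rate

/-- The coefficient `ā₁(β)` of smSGD, with `n` allowed to be any real number. For `n = 1` it is
the coefficient `a₁(β)` of mSGD. -/
noncomputable def smSGDCoeff₁ (n lminp β : ℝ) : ℝ :=
  1 + 3 * β / n + 2 * β ^ 2 / n - (1 + β / n) * lminp

/-- The coefficient `ā₂(β)` of smSGD, with `n` allowed to be any real number. For `n = 1` it is
the coefficient `a₂(β)` of mSGD. -/
noncomputable def smSGDCoeff₂ (n lmax β : ℝ) : ℝ := (β + 2 * β ^ 2 + β * lmax) / n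

/-- The convergence rate `q̄(β)` of smSGD, with `n` allowed to be any real number. For `n = 1` it
is the rate `q(β)` of mSGD. -/
noncomputable def smSGDRate (n lminp lmax β : ℝ) : ℝ :=
  largerRoot (smSGDCoeff₁ n lminp β) (smSGDCoeff₂ n lmax β)

variable {m n lminp lmax β : ℝ}

lemma smSGDCoeff₁_mul_self (hn : n ≠ 0) :
    smSGDCoeff₁ n lminp (β * n) = 1 + 3 * β + 2 * β ^ 2 * n - (1 + β) * lminp := by
  rw [smSGDCoeff₁]
  field_simp

lemma smSGDCoeff₂_mul_self (hn : n ≠ 0) :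
    smSGDCoeff₂ n lmax (β * n) = β + 2 * β ^ 2 * n + β * lmax := by
  rw [smSGDCoeff₂]
  field_simp

lemma smSGDCoeff₁_mul_self_sub (hm : m ≠ 0) (hn : n ≠ 0) :
    smSGDCoeff₁ n lminp (β * n) - smSGDCoeff₁ m lminp (β * m) = 2 * β ^ 2 * (n - m) := by
  rw [smSGDCoeff₁_mul_self hn, smSGDCoeff₁_mul_self hm]
  ring

lemma smSGDCoeff₂_mul_self_sub (hm : m ≠ 0) (hn : n ≠ 0) :
    smSGDCoeff₂ n lmax (β * n) - smSGDCoeff₂ m lmax (β * m) = 2 * β ^ 2 * (n - m) := by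
  rw [smSGDCoeff₂_mul_self hn, smSGDCoeff₂_mul_self hm]
  ring

lemma smSGDCoeff₂_mul_self_nonneg (hn : 0 < n) (hlmax : -1 ≤ lmax) (hβ : 0 ≤ β) :
    0 ≤ smSGDCoeff₂ n lmax (β * n) := by
  have h_one_add : 0 ≤ 1 + lmax := by linarith
  calc 0 ≤ β * (1 + lmax) + 2 * β ^ 2 * n := by positivity
    _ = smSGDCoeff₂ n lmax (β * n) := by rw [smSGDCoeff₂_mul_self hn.ne']; ring

theorem smSGD_rate_worse_than_mSGD_general (hm : 0 < m) (hmn : m ≤ n) (hlmax : -1 ≤ lmax)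
    (hβ : 0 ≤ β) :
    smSGDRate m lminp lmax (β * m) ≤ smSGDRate n lminp lmax (β * n) ∧
      smSGDCoeff₁ n lminp (β * n) - smSGDCoeff₁ m lminp (β * m) = 2 * β ^ 2 * (n - m) ∧
      smSGDCoeff₂ n lmax (β * n) - smSGDCoeff₂ m lmax (β * m) = 2 * β ^ 2 * (n - m) ∧
      0 ≤ 2 * β ^ 2 * (n - m) := by
  have hn : 0 < n := hm.trans_le hmn
  have coeff₁_sub := smSGDCoeff₁_mul_self_sub (lminp := lminp) (β := β) hm.ne' hn.ne'
  have coeff₂_sub := smSGDCoeff₂_mul_self_sub (lmax := lmax) (β := β) hm.ne' hn.ne'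
  have diff_nonneg : 0 ≤ 2 * β ^ 2 * (n - m) := mul_nonneg (by positivity) (sub_nonneg.2 hmn)
  refine ⟨largerRoot_le_largerRoot ?_ ?_ ?_, coeff₁_sub, coeff₂_sub, diff_nonneg⟩
  · linarith
  · linarith
  · exact smSGDCoeff₂_mul_self_nonneg hn hlmax hβ

end Rate

/-- Momentum versus stochastic momentum (unit stepsize `ω = 1`): for every `β ≥ 0`, the
rate of smSGD with momentum parameter `βn` is at least the rate of mSGD with momentum
parameter `β`: `q̄(βn) ≥ q(β)`; in particular `ā₁(βn) - a₁(β) = 2β²(n-1) ≥ 0` and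
`ā₂(βn) - a₂(β) = 2β²(n-1) ≥ 0`. -/
theorem smSGD_rate_worse_than_mSGD
    (n : ℕ) (hn : 1 ≤ n) (lminp lmax : ℝ) (hl0 : 0 ≤ lminp) (hl : lminp ≤ lmax)
    (a₁ a₂ ab₁ ab₂ q qb : ℝ → ℝ)
    (ha₁ : ∀ β, a₁ β = 1 + 3 * β + 2 * β ^ 2 - (1 + β) * lminp)
    (ha₂ : ∀ β, a₂ β = β + 2 * β ^ 2 + β * lmax)
    (hab₁ : ∀ β, ab₁ β = 1 + 3 * β / n + 2 * β ^ 2 / n - (1 + β / n) * lminp)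
    (hab₂ : ∀ β, ab₂ β = (β + 2 * β ^ 2 + β * lmax) / n)
    (hq : ∀ β, q β = (a₁ β + Real.sqrt ((a₁ β) ^ 2 + 4 * a₂ β)) / 2)
    (hqb : ∀ β, qb β = (ab₁ β + Real.sqrt ((ab₁ β) ^ 2 + 4 * ab₂ β)) / 2) :
    ∀ β : ℝ, 0 ≤ β →
      q β ≤ qb (β * n) ∧
      ab₁ (β * n) - a₁ β = 2 * β ^ 2 * (n - 1) ∧
      ab₂ (β * n) - a₂ β = 2 * β ^ 2 * (n - 1) ∧
      (0 : ℝ) ≤ 2 * β ^ 2 * (n - 1) := by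
  intro β hβ
  simpa [smSGDRate, smSGDCoeff₁, smSGDCoeff₂, largerRoot, ha₁, ha₂, hab₁, hab₂, hq, hqb] using
    smSGD_rate_worse_than_mSGD_general (lminp := lminp) one_pos (Nat.one_le_cast.2 hn)
      (by linarith : -1 ≤ lmax) hβ
end

section
/- Let 0 < ω < 2 and 0 < λ_min⁺ ≤ λ_max. If 0 ≤ β < (1/8)·(−4 + ωλ_min⁺ − ωλ_max + √((4 − ωλ_min⁺ + ωλ_max)² + 16ω(2−ω)λ_min⁺)), then a₁ + a₂ < 1, where a₁ := 1 + 3β + 2β² − (ω(2−ω) + ωβ)λ_min⁺ and a₂ := β + 2β² + ωβλ_max. Moreover, the stated upper bound on β is strictly positive, so this interval of admissible momentum parameters is nonempty. -/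
/-!
`a₁ + a₂ - 1` is a quadratic in `β` with positive leading coefficient `4` and negative constant
term `-ω(2-ω)λ_min⁺`. Its roots have opposite signs, so for `β ≥ 0` it is negative exactly to the
left of the larger root, which is the bound on `β`. Positivity of the bound is the case `β = 0`.
-/

theorem abs_lt_of_discrim_eq_sq {R : Type*} [CommRing R] [LinearOrder R] [IsStrictOrderedRing R]
    {a b c s : R} (hac : a * c < 0) (hs : 0 ≤ s) (hd : discrim a b c = s ^ 2) : |b| < s := by
  refine abs_lt_of_sq_lt_sq ?_ hs
  rw [← hd, discrim]
  linarith

theorem quadratic_neg_iff_lt_root {K : Type*} [Field K] [LinearOrder K] [IsStrictOrderedRing K]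
    {a b c s x : K} (ha : 0 < a) (hc : c < 0) (hs : 0 ≤ s)
    (hd : discrim a b c = s ^ 2) (hx : 0 ≤ x) :
    a * x ^ 2 + b * x + c < 0 ↔ x < (-b + s) / (2 * a) := by
  have four_a_pos : 0 < 4 * a := by positivity
  have factorization :
      4 * a * (a * x ^ 2 + b * x + c) = (2 * a * x + b + s) * (2 * a * x + b - s) := by
    rw [discrim] at hd
    linear_combination -hd
  have left_factor_pos : 0 < 2 * a * x + b + s := by
    have hb : -s < b :=
      (abs_lt.mp (abs_lt_of_discrim_eq_sq (mul_neg_of_pos_of_neg ha hc) hs hd)).1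
    have hax : 0 ≤ 2 * a * x := by positivity
    linarith
  calc a * x ^ 2 + b * x + c < 0
      ↔ 4 * a * (a * x ^ 2 + b * x + c) < 0 := (smul_neg_iff_of_pos_left four_a_pos).symm
    _ ↔ (2 * a * x + b + s) * (2 * a * x + b - s) < 0 := by rw [factorization]
    _ ↔ 2 * a * x + b - s < 0 := smul_neg_iff_of_pos_left left_factor_pos
    _ ↔ x * (2 * a) < -b + s := by constructor <;> intro h <;> linarith
    _ ↔ x < (-b + s) / (2 * a) := (lt_div_iff₀ (by positivity)).symm

namespace MSGD

/-- The coefficient `a₁` of the linear convergence theorem for mSGD/mSN/mSPP. -/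
def a₁ (ω lminp β : ℝ) : ℝ :=
  1 + 3 * β + 2 * β ^ 2 - (ω * (2 - ω) + ω * β) * lminp

/-- The coefficient `a₂` of the linear convergence theorem for mSGD/mSN/mSPP. -/
def a₂ (ω lmax β : ℝ) : ℝ :=
  β + 2 * β ^ 2 + ω * β * lmax

/-- The upper end of the interval of admissible momentum parameters `β`: the larger root of the
quadratic `a₁ + a₂ - 1` in `β`. -/
noncomputable def momentumBound (ω lminp lmax : ℝ) : ℝ :=
  (1 / 8) * (-4 + ω * lminp - ω * lmax +
    Real.sqrt ((4 - ω * lminp + ω * lmax) ^ 2 + 16 * ω * (2 - ω) * lminp))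

variable {ω lminp lmax β : ℝ}

theorem a₁_add_a₂_sub_one :
    a₁ ω lminp β + a₂ ω lmax β - 1 =
      4 * β ^ 2 + (4 - ω * lminp + ω * lmax) * β + -(ω * (2 - ω) * lminp) := by
  rw [a₁, a₂]
  ring

theorem a₁_add_a₂_lt_one_iff (h : 0 < ω * (2 - ω) * lminp) (hβ : 0 ≤ β) :
    a₁ ω lminp β + a₂ ω lmax β < 1 ↔ β < momentumBound ω lminp lmax := by
  set D := (4 - ω * lminp + ω * lmax) ^ 2 + 16 * ω * (2 - ω) * lminp with hD
  have discrim_eq :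
      discrim 4 (4 - ω * lminp + ω * lmax) (-(ω * (2 - ω) * lminp)) = Real.sqrt D ^ 2 := by
    have hD_nonneg : 0 ≤ D := by linarith [sq_nonneg (4 - ω * lminp + ω * lmax)]
    rw [Real.sq_sqrt hD_nonneg, hD, discrim]
    ring
  have bound_eq :
      momentumBound ω lminp lmax = (-(4 - ω * lminp + ω * lmax) + Real.sqrt D) / (2 * 4) := by
    rw [momentumBound]
    ring
  rw [← sub_neg, a₁_add_a₂_sub_one, bound_eq]
  exact quadratic_neg_iff_lt_root four_pos (neg_neg_of_pos h) D.sqrt_nonneg discrim_eq hβ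

theorem momentumBound_pos (h : 0 < ω * (2 - ω) * lminp) : 0 < momentumBound ω lminp lmax := by
  rw [← a₁_add_a₂_lt_one_iff h le_rfl, ← sub_neg, a₁_add_a₂_sub_one]
  linarith

end MSGD

theorem mSGD_admissible_momentum_interval_general
    (ω lminp lmax : ℝ) (h : 0 < ω * (2 - ω) * lminp) :
    (∀ β : ℝ, 0 ≤ β →
      (MSGD.a₁ ω lminp β + MSGD.a₂ ω lmax β < 1 ↔ β < MSGD.momentumBound ω lminp lmax)) ∧
    0 < MSGD.momentumBound ω lminp lmax :=
  ⟨fun _ hβ => MSGD.a₁_add_a₂_lt_one_iff h hβ, MSGD.momentumBound_pos h⟩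

/-- For `0 < ω < 2` and `0 < λ_min⁺ ≤ λ_max`, every momentum parameter `β` with
`0 ≤ β < (1/8)(-4 + ωλ_min⁺ - ωλ_max + √((4 - ωλ_min⁺ + ωλ_max)² + 16ω(2-ω)λ_min⁺))`
satisfies the condition `a₁ + a₂ < 1` of the linear convergence theorem for
mSGD/mSN/mSPP; moreover this upper bound on `β` is strictly positive. -/
theorem mSGD_admissible_momentum_interval
    (ω lminp lmax : ℝ)
    (hω0 : 0 < ω) (hω2 : ω < 2) (hl0 : 0 < lminp) (hl : lminp ≤ lmax) :
    (∀ β : ℝ, 0 ≤ β →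
      β < (1 / 8) * (-4 + ω * lminp - ω * lmax +
        Real.sqrt ((4 - ω * lminp + ω * lmax) ^ 2 + 16 * ω * (2 - ω) * lminp)) →
      (1 + 3 * β + 2 * β ^ 2 - (ω * (2 - ω) + ω * β) * lminp) +
        (β + 2 * β ^ 2 + ω * β * lmax) < 1) ∧
    0 < (1 / 8) * (-4 + ω * lminp - ω * lmax +
        Real.sqrt ((4 - ω * lminp + ω * lmax) ^ 2 + 16 * ω * (2 - ω) * lminp)) := by
  have ⟨condition_iff, bound_pos⟩ := mSGD_admissible_momentum_interval_general ω lminp lmax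
    (mul_pos (mul_pos hω0 (sub_pos.mpr hω2)) hl0)
  exact ⟨fun β hβ => (condition_iff β hβ).mpr, bound_pos⟩
end

section
/- Let n ≥ 1 be an integer, 0 < ω < 2 and 0 < λ_min⁺ ≤ λ_max. If 0 ≤ β < (1/8)·(−4 + ωλ_min⁺ − ωλ_max + √((4 − ωλ_min⁺ + ωλ_max)² + 16nω(2−ω)λ_min⁺)), then a₁ + a₂ < 1, where a₁ := 1 + 3β/n + 2β²/n − (ω(2−ω) + ωβ/n)λ_min⁺ and a₂ := (β + 2β² + ωβλ_max)/n. -/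
/-!
`n (a₁ + a₂ - 1)` is an upward parabola in `β` whose value at `β = 0` is `-n ω (2 - ω) λ_min⁺ < 0`.
Its roots therefore have opposite signs, and the admissible `β ≥ 0` are exactly those below the
positive root.
-/

theorem quadratic_neg_iff_sq_lt_discrim {R : Type*} [CommRing R] [LinearOrder R]
    [IsStrictOrderedRing R] {a : R} (ha : 0 < a) (b c x : R) :
    a * x ^ 2 + b * x + c < 0 ↔ (2 * a * x + b) ^ 2 < discrim a b c := by
  have complete_square :
      (2 * a * x + b) ^ 2 - discrim a b c = 4 * a * (a * x ^ 2 + b * x + c) := by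
    rw [discrim]
    ring
  rw [← sub_neg (a := (2 * a * x + b) ^ 2), complete_square,
    ← smul_eq_mul (4 * a), smul_neg_iff_of_pos_left (by positivity)]

theorem quadratic_neg_iff_lt_root_of_nonneg {a c x : ℝ} (ha : 0 < a) (b : ℝ) (hc : c < 0)
    (hx : 0 ≤ x) :
    a * x ^ 2 + b * x + c < 0 ↔ x < (-b + √(discrim a b c)) / (2 * a) := by
  have neg_sqrt_lt : -√(discrim a b c) < 2 * a * x + b := by
    have sq_lt_discrim : b ^ 2 < discrim a b c := by
      simpa [hc] using quadratic_neg_iff_sq_lt_discrim ha b c 0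
    calc
      -√(discrim a b c) < b := Real.neg_sqrt_lt_of_sq_lt sq_lt_discrim
      _ ≤ 2 * a * x + b := le_add_of_nonneg_left (by positivity)
  rw [quadratic_neg_iff_sq_lt_discrim ha, Real.sq_lt, and_iff_right neg_sqrt_lt,
    lt_div_iff₀' (by positivity), lt_neg_add_iff_add_lt, add_comm b]

theorem smSGD_a₁_add_a₂_eq_one_add_quadratic_div {K : Type*} [Field K] {n : K} (hn : n ≠ 0)
    (ω lminp lmax β : K) :
    (1 + 3 * β / n + 2 * β ^ 2 / n - (ω * (2 - ω) + ω * β / n) * lminp) +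
        (β + 2 * β ^ 2 + ω * β * lmax) / n =
      1 + (4 * β ^ 2 + (4 - ω * lminp + ω * lmax) * β + -(n * (ω * (2 - ω) * lminp))) / n := by
  field_simp
  ring

theorem smSGD_admissible_momentum_interval_general {n ω lminp β : ℝ} (lmax : ℝ) (hn : 0 < n)
    (hωl : 0 < ω * (2 - ω) * lminp) (hβ : 0 ≤ β) :
    (1 + 3 * β / n + 2 * β ^ 2 / n - (ω * (2 - ω) + ω * β / n) * lminp) +
        (β + 2 * β ^ 2 + ω * β * lmax) / n < 1 ↔
      β < (1 / 8) * (-4 + ω * lminp - ω * lmax +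
        √((4 - ω * lminp + ω * lmax) ^ 2 + 16 * n * ω * (2 - ω) * lminp)) := by
  have root_eq :
      (-(4 - ω * lminp + ω * lmax) +
          √(discrim 4 (4 - ω * lminp + ω * lmax) (-(n * (ω * (2 - ω) * lminp))))) / (2 * 4) =
        (1 / 8) * (-4 + ω * lminp - ω * lmax +
          √((4 - ω * lminp + ω * lmax) ^ 2 + 16 * n * ω * (2 - ω) * lminp)) := by
    rw [discrim]
    ring_nf
  rw [smSGD_a₁_add_a₂_eq_one_add_quadratic_div hn.ne', add_lt_iff_neg_left,
    div_lt_iff₀ hn, zero_mul,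
    quadratic_neg_iff_lt_root_of_nonneg four_pos _ (neg_neg_of_pos (mul_pos hn hωl)) hβ, root_eq]

/-- For `n ≥ 1`, `0 < ω < 2` and `0 < λ_min⁺ ≤ λ_max`, every momentum parameter `β` with
`0 ≤ β < (1/8)(-4 + ωλ_min⁺ - ωλ_max + √((4 - ωλ_min⁺ + ωλ_max)² + 16nω(2-ω)λ_min⁺))`
satisfies the condition `a₁ + a₂ < 1` of the linear convergence theorem for
smSGD/smSN/smSPP. -/
theorem smSGD_admissible_momentum_interval
    (n : ℕ) (hn : 1 ≤ n) (ω lminp lmax : ℝ)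
    (hω0 : 0 < ω) (hω2 : ω < 2) (hl0 : 0 < lminp) (hl : lminp ≤ lmax) :
    ∀ β : ℝ, 0 ≤ β →
      β < (1 / 8) * (-4 + ω * lminp - ω * lmax +
        Real.sqrt ((4 - ω * lminp + ω * lmax) ^ 2 + 16 * n * ω * (2 - ω) * lminp)) →
      (1 + 3 * β / n + 2 * β ^ 2 / n - (ω * (2 - ω) + ω * β / n) * lminp) +
        (β + 2 * β ^ 2 + ω * β * lmax) / n < 1 := by
  have hωl : 0 < ω * (2 - ω) * lminp := mul_pos (mul_pos hω0 (sub_pos.2 hω2)) hl0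
  exact fun β hβ ↦ (smSGD_admissible_momentum_interval_general lmax (Nat.cast_pos.2 hn) hωl hβ).2
end

section
/- Let ω ≥ 0, β ≥ 0 and 0 ≤ λ_min⁺ ≤ λ_max, set a₁ := 1 + 3β + 2β² − (ω(2−ω) + ωβ)λ_min⁺ and a₂ := β + 2β² + ωβλ_max, and assume a₁ + a₂ ≤ 1. Then the convergence rate q(β) := (a₁ + √(a₁² + 4a₂))/2 satisfies q(β) ≥ a₁ + a₂ = 1 + 4β + 4β² + ωβ(λ_max − λ_min⁺) − ω(2−ω)λ_min⁺ ≥ 1 − ω(2−ω)λ_min⁺; in particular, the rate of mSGD with any momentum β ≥ 0 is never better than the rate 1 − ω(2−ω)λ_min⁺ of SGD without momentum. -/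
/-!
The rate `q` is the larger root of `p(x) = x² - a₁ x - a₂`, so it dominates every point at which
`p` is nonpositive. One such point is `a₁ + a₂`, because `p(a₁ + a₂) = a₂ (a₁ + a₂ - 1)`.
Momentum only adds nonnegative terms to `a₁ + a₂`, which at `β = 0` is the rate of plain SGD.
-/

theorem le_half_add_sqrt_of_sq_le {a b x : ℝ} (hx : x ^ 2 ≤ a * x + b) :
    x ≤ (a + √(a ^ 2 + 4 * b)) / 2 := by
  have complete_square : (2 * x - a) ^ 2 ≤ a ^ 2 + 4 * b := by linarith
  linarith [Real.le_sqrt_of_sq_le complete_square]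

theorem add_le_half_add_sqrt {a b : ℝ} (hb : 0 ≤ b) (hab : a + b ≤ 1) :
    a + b ≤ (a + √(a ^ 2 + 4 * b)) / 2 := by
  apply le_half_add_sqrt_of_sq_le
  calc
    (a + b) ^ 2 = a * (a + b) + b * (a + b) := by ring
    _ ≤ a * (a + b) + b := add_le_add_right (mul_le_of_le_one_right hb hab) _

/-- The theoretical rate of mSGD is never better than that of SGD without momentum:
with `a₁ = 1 + 3β + 2β² - (ω(2-ω) + ωβ)λ_min⁺` and `a₂ = β + 2β² + ωβλ_max`, assuming
`a₁ + a₂ ≤ 1`, the rate `q(β) = (a₁ + √(a₁² + 4a₂))/2` satisfies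
`q(β) ≥ a₁ + a₂ = 1 + 4β + 4β² + ωβ(λ_max - λ_min⁺) - ω(2-ω)λ_min⁺ ≥ 1 - ω(2-ω)λ_min⁺`. -/
theorem mSGD_rate_lower_bound
    (ω β lminp lmax : ℝ)
    (hω : 0 ≤ ω) (hβ : 0 ≤ β) (hl0 : 0 ≤ lminp) (hl : lminp ≤ lmax)
    (a₁ a₂ q : ℝ)
    (ha₁ : a₁ = 1 + 3 * β + 2 * β ^ 2 - (ω * (2 - ω) + ω * β) * lminp)
    (ha₂ : a₂ = β + 2 * β ^ 2 + ω * β * lmax)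
    (hsum : a₁ + a₂ ≤ 1)
    (hq : q = (a₁ + Real.sqrt (a₁ ^ 2 + 4 * a₂)) / 2) :
    a₁ + a₂ ≤ q ∧
    a₁ + a₂ = 1 + 4 * β + 4 * β ^ 2 + ω * β * (lmax - lminp) - ω * (2 - ω) * lminp ∧
    1 - ω * (2 - ω) * lminp ≤ a₁ + a₂ := by
  have ha₂_nonneg : 0 ≤ a₂ := by
    have : 0 ≤ lmax := hl0.trans hl
    rw [ha₂]
    positivity
  have hsum_eq : a₁ + a₂ =
      1 + 4 * β + 4 * β ^ 2 + ω * β * (lmax - lminp) - ω * (2 - ω) * lminp := by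
    rw [ha₁, ha₂]
    ring
  have momentum_cost_nonneg : 0 ≤ 4 * β + 4 * β ^ 2 + ω * β * (lmax - lminp) := by
    have : 0 ≤ lmax - lminp := sub_nonneg.2 hl
    positivity
  exact ⟨hq ▸ add_le_half_add_sqrt ha₂_nonneg hsum, hsum_eq, by linarith [momentum_cost_nonneg]⟩
end

section
/- Let ω, λ ∈ ℝ with 0 < ωλ ≤ 1, and let β satisfy (1 − √(ωλ))² < β < 1. Let (s_k)_{k≥0} be any real sequence satisfying the recurrence s_{k+1} = (1 + β − ωλ)s_k − β s_{k−1} for k ≥ 1. Then there exists a constant P ≥ 0 (depending on s₀ and s₁) such that |s_k| ≤ 2P·β^{k/2} for all k ≥ 0. -/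
/-!
The form `y² - a x y + b x²` is multiplied by `b` at each step of `u (k + 2) = a u (k + 1) - b u k`,
so its value at `(u k, u (k + 1))` is `bᵏ` times its initial value. Completing the square bounds
`(4 b - a²) (u k)²` by four times that value, which is a bound on `u k` as soon as the
characteristic roots are not real. For `b = β` and `a = 1 + β - ω λ`, the roots are not real exactly
when `1`, `√β` and `√(ω λ)` are the sides of a nondegenerate triangle: `a / (2 √β)` is then the
cosine of the angle between the sides `1` and `√β`. Since `√β ≤ 1`, the triangle inequalities
amount to `|1 - √(ω λ)| < √β`.
-/

section CharForm

variable {R : Type*} [CommRing R]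

/-- The binary quadratic form `y² - a x y + b x²` obtained by homogenizing the characteristic
polynomial `y² - a y + b` of the recurrence `u (k + 2) = a * u (k + 1) - b * u k`. It is evaluated
at consecutive terms `x = u k`, `y = u (k + 1)` of a solution. -/
def charForm (a b x y : R) : R :=
  y ^ 2 - a * x * y + b * x ^ 2

theorem charForm_recurrence_step (a b x y : R) :
    charForm a b y (a * y - b * x) = b * charForm a b x y := by
  unfold charForm
  ring

theorem four_mul_charForm (a b x y : R) :
    4 * charForm a b x y = (2 * y - a * x) ^ 2 + (4 * b - a ^ 2) * x ^ 2 := by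
  unfold charForm
  ring

theorem charForm_eq_pow_mul {a b : R} {u : ℕ → R}
    (hu : ∀ k, u (k + 2) = a * u (k + 1) - b * u k) (k : ℕ) :
    charForm a b (u k) (u (k + 1)) = b ^ k * charForm a b (u 0) (u 1) := by
  induction k with
  | zero => rw [pow_zero, one_mul]
  | succ k ih => rw [hu, charForm_recurrence_step, ih, pow_succ', mul_assoc]

variable [LinearOrder R] [IsStrictOrderedRing R]

theorem mul_sq_le_four_mul_charForm (a b x y : R) :
    (4 * b - a ^ 2) * x ^ 2 ≤ 4 * charForm a b x y := by
  rw [four_mul_charForm]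
  exact le_add_of_nonneg_left (sq_nonneg _)

theorem charForm_nonneg {a b : R} (hab : a ^ 2 ≤ 4 * b) (x y : R) : 0 ≤ charForm a b x y := by
  have h : 0 ≤ (4 * b - a ^ 2) * x ^ 2 := mul_nonneg (sub_nonneg.mpr hab) (sq_nonneg x)
  linarith [mul_sq_le_four_mul_charForm a b x y]

end CharForm

theorem abs_le_two_mul_sqrt_charForm_mul_sqrt_pow {a b : ℝ} (hab : a ^ 2 < 4 * b) {u : ℕ → ℝ}
    (hu : ∀ k, u (k + 2) = a * u (k + 1) - b * u k) (k : ℕ) :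
    |u k| ≤ 2 * √(charForm a b (u 0) (u 1) / (4 * b - a ^ 2)) * √b ^ k := by
  have hb : 0 ≤ b := by linarith [sq_nonneg a]
  have hd : 0 < 4 * b - a ^ 2 := sub_pos.mpr hab
  have hq : 0 ≤ charForm a b (u 0) (u 1) / (4 * b - a ^ 2) :=
    div_nonneg (charForm_nonneg hab.le _ _) hd.le
  refine abs_le_of_sq_le_sq ?_ (by positivity)
  calc u k ^ 2
      ≤ 4 * charForm a b (u k) (u (k + 1)) / (4 * b - a ^ 2) :=
        (le_div_iff₀' hd).mpr (mul_sq_le_four_mul_charForm a b _ _)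
    _ = 2 ^ 2 * (charForm a b (u 0) (u 1) / (4 * b - a ^ 2)) * b ^ k := by
        rw [charForm_eq_pow_mul hu]
        ring
    _ = (2 * √(charForm a b (u 0) (u 1) / (4 * b - a ^ 2)) * √b ^ k) ^ 2 := by
        rw [mul_pow, mul_pow, Real.sq_sqrt hq, pow_right_comm, Real.sq_sqrt hb]

theorem sq_lt_sq_two_mul_of_triangle {R : Type*} [CommRing R] [LinearOrder R]
    [IsStrictOrderedRing R] {p r t : R} (hp : p < r + t) (hr : r < t + p) (ht : t < p + r) :
    (p ^ 2 + r ^ 2 - t ^ 2) ^ 2 < (2 * p * r) ^ 2 := by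
  have hlower : (p - r) ^ 2 < t ^ 2 := sq_lt_sq' (by linarith) (by linarith)
  have hupper : t ^ 2 < (p + r) ^ 2 := sq_lt_sq' (by linarith) ht
  exact sq_lt_sq' (by linarith) (by linarith)

theorem sq_one_add_sub_lt_four_mul {x β : ℝ} (hβl : (1 - √x) ^ 2 < β) (hβu : β ≤ 1) :
    (1 + β - x) ^ 2 < 4 * β := by
  have hβ : 0 ≤ β := (sq_nonneg _).trans hβl.le
  have hr : √β ≤ 1 := Real.sqrt_le_one.mpr hβu
  obtain ⟨hlower, hupper⟩ := Real.sq_lt.mp hβl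
  have hx : 0 < √x := by linarith
  have h := sq_lt_sq_two_mul_of_triangle (p := 1) (r := √β) (t := √x)
    (by linarith) (by linarith) (by linarith)
  rw [mul_pow, Real.sq_sqrt hβ, Real.sq_sqrt (Real.sqrt_pos.mp hx).le] at h
  linarith

theorem recurrence_complex_roots_decay_general
    (ω lam β : ℝ) (hβl : (1 - √(ω * lam)) ^ 2 < β) (hβu : β ≤ 1) (s : ℕ → ℝ)
    (hrec : ∀ k, 1 ≤ k → s (k + 1) = (1 + β - ω * lam) * s k - β * s (k - 1)) :
    ∃ P : ℝ, 0 ≤ P ∧ ∀ k : ℕ, |s k| ≤ 2 * P * √β ^ k :=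
  ⟨_, Real.sqrt_nonneg _, abs_le_two_mul_sqrt_charForm_mul_sqrt_pow
    (sq_one_add_sub_lt_four_mul hβl hβu) fun k => hrec (k + 1) k.succ_pos⟩

/-- Any real sequence satisfying the recurrence `s_{k+1} = (1 + β - ωλ)s_k - β s_{k-1}`
for `k ≥ 1`, with `0 < ωλ ≤ 1` and `(1 - √(ωλ))² < β < 1`, satisfies
`|s_k| ≤ 2 P β^{k/2}` for all `k ≥ 0`, for some constant `P ≥ 0` depending on `s₀, s₁`. -/
theorem recurrence_complex_roots_decay
    (ω lam β : ℝ) (h0 : 0 < ω * lam) (h1 : ω * lam ≤ 1)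
    (hβl : (1 - Real.sqrt (ω * lam)) ^ 2 < β) (hβu : β < 1)
    (s : ℕ → ℝ)
    (hrec : ∀ k, 1 ≤ k → s (k + 1) = (1 + β - ω * lam) * s k - β * s (k - 1)) :
    ∃ P : ℝ, 0 ≤ P ∧ ∀ k : ℕ, |s k| ≤ 2 * P * Real.sqrt β ^ k :=
  recurrence_complex_roots_decay_general ω lam β hβl hβu.le s hrec
end
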